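/- arXiv:2309.07685 — 2 statements merged into one kernel-verified Lean document; each statement's English description precedes it below -/
import Mathlib

section
/- Let p be a prime with p ≡ 1 (mod 3), write p = A² + 3B² with integers A, B and A ≡ 1 (mod 3), and let a be an integer with p ∤ a. If (2a²)^((p−1)/3) ≡ 1 (mod p), then V_p(x² + a/x) = (2p − 1 + 2A)/3; if (2a²)^((p−1)/3) ≡ (−1 + A·B⁻¹)/2 (mod p), then V_p(x² + a/x) = (2p − 1 − A + 3B)/3; and if (2a²)^((p−1)/3) ≡ (−1 − A·B⁻¹)/2 (mod p), then V_p(x² + a/x) = (2p − 1 − A − 3B)/3. -/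
section helpers
open Finset
variable {p : ℕ} [hp : Fact p.Prime]

noncomputable def SS (c : ZMod p) : ℤ := ∑ r : ZMod p, quadraticChar (ZMod p) (1 - c * r ^ 3)

lemma sum_qc (hp2 : p ≠ 2) : ∑ x : ZMod p, quadraticChar (ZMod p) x = 0 :=
  quadraticChar_sum_zero (by rwa [ZMod.ringChar_zmod_n])

lemma sum_lin (hp2 : p ≠ 2) (u : ZMod p) :
    ∑ c : ZMod p, quadraticChar (ZMod p) (1 - c * u) = if u = 0 then (p : ℤ) else 0 := by
  split_ifs with h
  · subst h; simp
  · rw [← sum_qc hp2]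
    exact Fintype.sum_equiv ((Equiv.mulRight₀ u h).trans (Equiv.subLeft 1)) _ _ (fun x => by simp)

lemma sum_quad (hp2 : p ≠ 2) (u v : ZMod p) :
    ∑ c : ZMod p, quadraticChar (ZMod p) (1 - c * u) * quadraticChar (ZMod p) (1 - c * v)
      = (if u = v then (p : ℤ) else 0) - quadraticChar (ZMod p) (u * v) := by
  by_cases hu : u = 0
  · subst hu
    simp only [mul_zero, sub_zero, map_one, one_mul, sum_lin hp2, zero_mul, MulChar.map_zero]
    simp [eq_comm]
  by_cases hv : v = 0
  · subst hv
    simp only [mul_zero, sub_zero, map_one, mul_one, sum_lin hp2, MulChar.map_zero]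
  by_cases huv : u = v
  · subst huv
    simp only [← sq, if_true]
    have h1 : ∀ c : ZMod p, quadraticChar (ZMod p) (1 - c * u) ^ 2 = 1 - if c = u⁻¹ then 1 else 0 := by
      intro c
      split_ifs with h
      · subst h; simp [hu]
      · rw [quadraticChar_sq_one]; · simp
        intro h2; apply h; field_simp; linear_combination -h2
    rw [sum_congr rfl (fun c _ => h1 c), map_pow, quadraticChar_sq_one hu]
    simp
  · rw [if_neg huv, zero_sub]
    have hd : v - u ≠ 0 := sub_ne_zero.mpr (Ne.symm huv)
    have hJ : ∑ x : ZMod p, quadraticChar (ZMod p) x * quadraticChar (ZMod p) (1 - x)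
        = - quadraticChar (ZMod p) (-1) := by
      have := jacobiSum_nontrivial_inv (χ := quadraticChar (ZMod p))
        (quadraticChar_ne_one (by rwa [ZMod.ringChar_zmod_n]))
      rw [(quadraticChar_isQuadratic (ZMod p)).inv] at this
      exact this
    have hsq : ∀ x : ZMod p, x ≠ 0 → quadraticChar (ZMod p) x * quadraticChar (ZMod p) x = 1 := by
      intro x hx; rw [← sq, quadraticChar_sq_one hx]
    let e : ZMod p ≃ ZMod p :=
      ((Equiv.mulRight₀ u hu).trans (Equiv.subLeft 1)).trans (Equiv.mulRight₀ (v / (v - u)) (div_ne_zero hv hd))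
    have h2 : ∑ c : ZMod p, quadraticChar (ZMod p) (1 - c * u) * quadraticChar (ZMod p) (1 - c * v)
       = ∑ x : ZMod p, quadraticChar (ZMod p) (-(u * v)) *
          (quadraticChar (ZMod p) x * quadraticChar (ZMod p) (1 - x)) := by
      refine Fintype.sum_equiv e _ _ (fun c => ?_)
      have e1 : e c = (1 - c * u) * (v / (v - u)) := by simp [e]
      rw [e1, ← map_mul, ← map_mul, ← map_mul]
      have e2 : -(u * v) * ((1 - c * u) * (v / (v - u)) * (1 - (1 - c * u) * (v / (v - u)))) =
        (1 - c * u) * (1 - c * v) * (u * v / (v - u)) ^ 2 := by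
        field_simp; ring
      rw [e2, map_mul _ _ (_ ^ 2), map_pow, quadraticChar_sq_one, mul_one]
      exact div_ne_zero (mul_ne_zero hu hv) hd
    rw [h2, ← mul_sum, hJ, mul_neg, ← map_mul]
    congr 2; ring

lemma cube_roots (hp1 : p % 3 = 1) :
    (univ.filter (fun r : ZMod p => r ^ 3 = 1)).card = 3 := by
  have h2 := hp.out.two_le
  obtain ⟨g, hg⟩ := IsCyclic.exists_generator (α := (ZMod p)ˣ)
  have ho : orderOf g = p - 1 := by
    rw [orderOf_eq_card_of_forall_mem_zpowers hg, Nat.card_eq_fintype_card, ZMod.card_units]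
  have hpr : IsPrimitiveRoot g (p - 1) := by rw [← ho]; exact IsPrimitiveRoot.orderOf g
  have hw : IsPrimitiveRoot (g ^ ((p-1)/3)) 3 := hpr.pow (by omega) (by omega)
  have hw' : IsPrimitiveRoot ((g ^ ((p-1)/3) : (ZMod p)ˣ) : ZMod p) 3 := IsPrimitiveRoot.coe_units_iff.mpr hw
  have := hw'.card_nthRootsFinset
  refine Eq.trans ?_ this
  congr 1
  ext r
  simp [Polynomial.mem_nthRootsFinset]

lemma cube_fib (hp1 : p % 3 = 1) (u : ZMod p) (hu : u ≠ 0) :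
    (univ.filter (fun r : ZMod p => u ^ 3 = r ^ 3)).card = 3 := by
  refine Eq.trans ?_ (cube_roots hp1)
  refine card_bij' (fun r _ => r / u) (fun r _ => r * u) ?_ ?_ ?_ ?_
  · intro r; simp only [mem_filter, mem_univ, true_and]; intro h; rw [div_pow, ← h]; field_simp
  · intro r; simp only [mem_filter, mem_univ, true_and]; intro h; rw [mul_pow, h, one_mul]
  · intro r _; field_simp
  · intro r _; field_simp

lemma sum_S (hp2 : p ≠ 2) : ∑ c : ZMod p, SS c = p := by
  unfold SS
  rw [sum_comm, sum_congr rfl (fun r _ => sum_lin hp2 (r ^ 3))]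
  simp

lemma sum_S2 (hp2 : p ≠ 2) (hp1 : p % 3 = 1) : ∑ c : ZMod p, SS c ^ 2 = p * (1 + 3 * (p - 1)) := by
  unfold SS
  simp only [sq, sum_mul_sum]
  rw [sum_comm]
  have : ∀ r : ZMod p, ∑ c : ZMod p, ∑ s : ZMod p, quadraticChar (ZMod p) (1 - c * r ^ 3) *
      quadraticChar (ZMod p) (1 - c * s ^ 3) = if r = 0 then (p : ℤ) else 3 * p := by
    intro r
    rw [sum_comm]
    simp only [sum_quad hp2, sum_sub_distrib]
    have h1 : ∑ s : ZMod p, quadraticChar (ZMod p) (r ^ 3 * s ^ 3) = 0 := by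
      have : ∀ s : ZMod p, quadraticChar (ZMod p) (r ^ 3 * s ^ 3) =
          quadraticChar (ZMod p) (r ^ 3) * quadraticChar (ZMod p) s := by
        intro s
        rw [map_mul, map_pow _ s]
        by_cases hs : s = 0
        · subst hs; simp
        · rw [pow_succ (quadraticChar (ZMod p) s), quadraticChar_sq_one hs, one_mul]
      simp only [this, ← mul_sum, sum_qc hp2, mul_zero]
    rw [h1, sub_zero, ← sum_filter, sum_const, nsmul_eq_mul]
    split_ifs with h
    · subst h
      have : (univ.filter (fun s : ZMod p => (0 : ZMod p) ^ 3 = s ^ 3)) = {0} := by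
        ext s; simp [eq_comm]
      rw [this]; simp
    · rw [cube_fib hp1 r h]; norm_num
  rw [sum_congr rfl (fun r _ => this r)]
  have h3 : ∀ r : ZMod p, (if r = 0 then (p : ℤ) else 3 * p) = 3 * p - if r = 0 then 2 * (p : ℤ) else 0 := by
    intro r; split_ifs <;> ring
  simp only [h3, sum_sub_distrib]
  simp
  ring

lemma SS_zero : SS (0 : ZMod p) = p := by simp [SS]

lemma SS_cube (c t : ZMod p) (ht : t ≠ 0) : SS (t ^ 3 * c) = SS c := by
  unfold SS
  refine Fintype.sum_equiv (Equiv.mulLeft₀ t ht) _ _ (fun r => ?_)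
  simp only [Equiv.mulLeft₀_apply]
  congr 1; ring

/-- class function sum -/
lemma class_sum (F : ZMod p → ℤ) (g : (ZMod p)ˣ) (hg : ∀ x, x ∈ Submonoid.powers g)
    (hF : ∀ c t : ZMod p, t ≠ 0 → F (t ^ 3 * c) = F c) :
    3 * (∑ c : ZMod p, F c) = 3 * F 0 + (p - 1) * (F 1 + F g + F (g ^ 2)) := by
  have key : ∀ n : ℕ, F (g ^ n) + F (g ^ (n + 1)) + F (g ^ (n + 2)) = F 1 + F g + F (g ^ 2) := by
    intro n
    induction n with
    | zero => simp
    | succ n ih =>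
      rw [← ih]
      have := hF (g ^ n) g g.ne_zero
      rw [← pow_add] at this
      rw [show n + 1 + 2 = 3 + n by ring, this]; ring
  have hs : ∀ h : ZMod p → ℤ, ∑ c : ZMod p, h c = h 0 + ∑ c : (ZMod p)ˣ, h c := by
    intro h
    rw [← Fintype.sum_equiv (unitsEquivNeZero (G₀ := ZMod p)).symm (fun x => h x) (fun c => h c) (fun x => by simp)]
    rw [← Fintype.sum_subtype_add_sum_subtype (fun x : ZMod p => x = 0) h]
    simp
    exact congrArg h (default : {x : ZMod p // x = 0}).prop
  have h1 : ∀ k : ℕ, ∑ c : (ZMod p)ˣ, F c = ∑ c : (ZMod p)ˣ, F (c * g ^ k) := by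
    intro k
    refine (Fintype.sum_equiv (Equiv.mulRight (g ^ k)) _ _ (fun x => by simp)).symm
  have h2 : 3 * ∑ c : (ZMod p)ˣ, F c = ∑ c : (ZMod p)ˣ, (F 1 + F g + F (g ^ 2)) := by
    calc _ = ∑ c : (ZMod p)ˣ, F (c * g ^ 0) + ∑ c : (ZMod p)ˣ, F (c * g ^ 1) + ∑ c : (ZMod p)ˣ, F (c * g ^ 2) := by
            rw [← h1, ← h1, ← h1]; ring
      _ = _ := by
        rw [← sum_add_distrib, ← sum_add_distrib]
        refine sum_congr rfl (fun c _ => ?_)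
        obtain ⟨n, rfl⟩ := hg c
        rw [← key n]; push_cast; simp only [← pow_add, add_zero]
  rw [hs, mul_add, h2]
  have := hp.out.two_le
  rw [sum_const, card_univ, ZMod.card_units, nsmul_eq_mul, Nat.cast_sub (show 1 ≤ p by omega)]
  simp

lemma SS_mod (g : (ZMod p)ˣ) (hg : orderOf g = p - 1) (hp1 : p % 3 = 1) (hp2 : p ≠ 2) (c : ZMod p) :
    ((SS c : ℤ) : ZMod p) = c ^ ((p - 1) / 3) * ((SS (1 : ZMod p) : ℤ) : ZMod p) := by
  have h2 := hp.out.two_le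
  have hodd := hp.out.eq_two_or_odd
  have hs : ∀ k ∈ range (p / 2 + 1), k ≠ (p - 1) / 3 → ∑ r : ZMod p, r ^ (3 * k) = 0 := by
    intro k hk hne
    rw [mem_range] at hk
    by_cases h0 : k = 0
    · subst h0; simp
    by_contra hc
    have h1 : (g : ZMod p) ^ (3 * k) * ∑ r : ZMod p, r ^ (3 * k) = ∑ r : ZMod p, r ^ (3 * k) := by
      rw [mul_sum]
      exact Fintype.sum_equiv (Equiv.mulLeft₀ (g : ZMod p) g.ne_zero) _ _ (fun r => by simp [mul_pow])
    have h3 : (g : ZMod p) ^ (3 * k) = 1 := by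
      apply mul_right_cancel₀ hc; rw [h1, one_mul]
    have h4 : g ^ (3 * k) = 1 := by ext; push_cast; exact h3
    have h5 := orderOf_dvd_of_pow_eq_one h4
    rw [hg] at h5
    obtain ⟨q, hq⟩ := h5
    have : q < 2 := by
      by_contra hq2
      have : (p - 1) * 2 ≤ (p - 1) * q := Nat.mul_le_mul_left _ (by omega)
      omega
    interval_cases q <;> omega
  have hx : ∀ c : ZMod p, ((SS c : ℤ) : ZMod p) =
      ∑ k ∈ range (p / 2 + 1), (-c) ^ k * ((p / 2).choose k : ZMod p) * ∑ r : ZMod p, r ^ (3 * k) := by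
    intro c
    unfold SS
    push_cast
    simp only [mul_sum]
    rw [sum_comm]
    refine sum_congr rfl (fun r _ => ?_)
    rw [quadraticChar_eq_pow_of_char_ne_two' (by rwa [ZMod.ringChar_zmod_n]), ZMod.card,
      show (1 : ZMod p) - c * r ^ 3 = (-c) * r ^ 3 + 1 by ring, add_pow]
    refine sum_congr rfl (fun k _ => ?_)
    rw [mul_pow, one_pow, pow_mul]; ring
  rw [hx, hx, mul_sum]
  refine sum_congr rfl (fun k hk => ?_)
  by_cases h : k = (p - 1) / 3
  · subst h
    rw [neg_pow]; ring
  · rw [hs k hk h]; simp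

lemma SS_one_mod3 (hp1 : p % 3 = 1) : (3 : ℤ) ∣ SS (1 : ZMod p) - 1 := by
  unfold SS
  simp only [one_mul]
  rw [← sum_fiberwise univ (fun r : ZMod p => r ^ 3),
    ← sum_erase_add _ _ (mem_univ (0 : ZMod p))]
  have h0 : ∑ r ∈ univ.filter (fun r : ZMod p => r ^ 3 = 0), quadraticChar (ZMod p) (1 - r ^ 3) = 1 := by
    have : univ.filter (fun r : ZMod p => r ^ 3 = 0) = {0} := by ext; simp
    rw [this, sum_singleton]; simp
  rw [h0, add_sub_cancel_right]
  refine dvd_sum (fun v hv => ?_)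
  have hv0 : v ≠ 0 := (mem_erase.mp hv).1
  have h1 : ∑ r ∈ univ.filter (fun r : ZMod p => r ^ 3 = v), quadraticChar (ZMod p) (1 - r ^ 3)
      = ∑ r ∈ univ.filter (fun r : ZMod p => r ^ 3 = v), quadraticChar (ZMod p) (1 - v) := by
    refine sum_congr rfl (fun r hr => ?_)
    rw [(mem_filter.mp hr).2]
  rw [h1, sum_const, nsmul_eq_mul]
  by_cases he : ∃ u : ZMod p, u ^ 3 = v
  · obtain ⟨u, rfl⟩ := he
    have := cube_fib hp1 u (by rintro rfl; simp at hv0)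
    simp only [eq_comm (a := u ^ 3)] at this
    rw [this]; simp
  · have : univ.filter (fun r : ZMod p => r ^ 3 = v) = ∅ := by
      ext r; simp; intro h; exact he ⟨r, h⟩
    rw [this]; simp

lemma SS_one_even (hp1 : p % 3 = 1) (hp2 : p ≠ 2) : (2 : ℤ) ∣ SS (1 : ZMod p) := by
  have hodd := hp.out.eq_two_or_odd
  have h : (2 : ℤ) ∣ ∑ r : ZMod p, (quadraticChar (ZMod p) (1 - 1 * r ^ 3) - 1 + if r ^ 3 = 1 then 1 else 0) := by
    refine dvd_sum (fun r _ => ?_)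
    split_ifs with h
    · rw [h]; simp
    · have : (1 : ZMod p) - 1 * r ^ 3 ≠ 0 := by
        intro h2; apply h; linear_combination -h2
      rcases quadraticChar_dichotomy this with h3 | h3 <;> rw [h3] <;> norm_num
  rw [sum_add_distrib, sum_sub_distrib, ← sum_filter] at h
  simp only [sum_const, cube_roots hp1, card_univ, ZMod.card] at h
  change (2 : ℤ) ∣ SS 1 - _ + _ at h
  simp at h
  omega

lemma arith (A B S0 S1 S2 : ℤ) (hpAB : (p : ℤ) = A ^ 2 + 3 * B ^ 2) (hA : A % 3 = 1)
    (h1 : S0 + S1 + S2 = 0) (h2 : S0 ^ 2 + S1 ^ 2 + S2 ^ 2 = 6 * p) (h3 : (3 : ℤ) ∣ S0 - 1)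
    (h4 : (2 : ℤ) ∣ S0) : S0 = -2 * A ∧ (S1 = A + 3 * B ∨ S1 = A - 3 * B) ∧
      (S2 = A + 3 * B ∨ S2 = A - 3 * B) := by
  have hpp : Prime (p : ℤ) := Nat.prime_iff_prime_int.mp hp.out
  have hpos : (0 : ℤ) < p := by exact_mod_cast hp.out.pos
  obtain ⟨t, rfl⟩ := h4
  obtain ⟨A', rfl⟩ : ∃ A', t = -A' := ⟨-t, by ring⟩
  obtain ⟨D, hD⟩ : ∃ D, S1 = A' + D := ⟨S1 - A', by ring⟩
  have hS2 : S2 = A' - D := by linarith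
  have hDD : D ^ 2 = 3 * (p - A' ^ 2) := by
    rw [hD, hS2] at h2; nlinarith
  have h3D : (3 : ℤ) ∣ D := Int.prime_three.dvd_of_dvd_pow (⟨_, hDD⟩ : (3 : ℤ) ∣ D ^ 2)
  obtain ⟨B', rfl⟩ := h3D
  have hp' : (p : ℤ) = A' ^ 2 + 3 * B' ^ 2 := by nlinarith
  have hdv : (p : ℤ) ∣ (A * B' - A' * B) * (A * B' + A' * B) :=
    ⟨B' ^ 2 - B ^ 2, by linear_combination (-B' ^ 2) * hpAB + (B ^ 2) * hp'⟩
  have small : ∀ X Y : ℤ, (p : ℤ) ^ 2 = Y ^ 2 + 3 * X ^ 2 → (p : ℤ) ∣ X → X = 0 := by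
    intro X Y h hd
    refine Int.eq_zero_of_abs_lt_dvd hd ?_
    apply abs_lt_of_sq_lt_sq _ hpos.le
    by_contra hc
    nlinarith [sq_nonneg Y, sq_nonneg X]
  have hX : A ^ 2 * B' ^ 2 = A' ^ 2 * B ^ 2 := by
    rcases hpp.dvd_or_dvd hdv with hd | hd
    · have := small _ (A * A' + 3 * B * B')
        (by linear_combination (p : ℤ) * hpAB + (A ^ 2 + 3 * B ^ 2) * hp') hd
      linear_combination (A * B' + A' * B) * this
    · have := small _ (A * A' - 3 * B * B')
        (by linear_combination (p : ℤ) * hpAB + (A ^ 2 + 3 * B ^ 2) * hp') hd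
      linear_combination (A * B' - A' * B) * this
  have hBB : B' ^ 2 = B ^ 2 := by
    apply mul_left_cancel₀ hpos.ne'
    linear_combination (B' ^ 2) * hpAB - (B ^ 2) * hp' + hX
  have hAA : A' ^ 2 = A ^ 2 := by linarith
  have hA' : A' = A := by
    rcases sq_eq_sq_iff_eq_or_eq_neg.mp hAA with h | h
    · exact h
    · omega
  subst hA'
  rcases sq_eq_sq_iff_eq_or_eq_neg.mp hBB with h | h <;> subst h
  · refine ⟨by ring, Or.inl hD, Or.inr hS2⟩
  · refine ⟨by ring, Or.inr (by rw [hD]; ring), Or.inl (by rw [hS2]; ring)⟩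

lemma SS_main (hp1 : p % 3 = 1) (A B : ℤ) (hpAB : (p : ℤ) = A ^ 2 + 3 * B ^ 2) (hA : A % 3 = 1)
    (c : ZMod p) (hc : c ≠ 0) :
    (SS c = -2 * A ∨ SS c = A + 3 * B ∨ SS c = A - 3 * B) ∧
      ((SS c : ℤ) : ZMod p) = c ^ ((p - 1) / 3) * (-2 * A) := by
  have hp2 : p ≠ 2 := by omega
  have h2 := hp.out.two_le
  obtain ⟨g, hgz⟩ := IsCyclic.exists_generator (α := (ZMod p)ˣ)
  have ho : orderOf g = p - 1 := by
    rw [orderOf_eq_card_of_forall_mem_zpowers hgz, Nat.card_eq_fintype_card, ZMod.card_units]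
  have hg : ∀ x, x ∈ Submonoid.powers g := fun x => mem_powers_iff_mem_zpowers.mpr (hgz x)
  have hpos : (0 : ℤ) < (p : ℤ) - 1 := by omega
  have e1 : SS (1 : ZMod p) + SS (g : ZMod p) + SS ((g : ZMod p) ^ 2) = 0 := by
    have := class_sum (fun c => SS c) g hg SS_cube
    rw [sum_S hp2, SS_zero] at this
    have h : ((p : ℤ) - 1) * (SS (1 : ZMod p) + SS (g : ZMod p) + SS ((g : ZMod p) ^ 2)) = 0 := by linarith
    exact (mul_eq_zero.mp h).resolve_left hpos.ne'
  have e2 : SS (1 : ZMod p) ^ 2 + SS (g : ZMod p) ^ 2 + SS ((g : ZMod p) ^ 2) ^ 2 = 6 * p := by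
    have := class_sum (fun c => SS c ^ 2) g hg (fun c t ht => by simp only [SS_cube c t ht])
    rw [sum_S2 hp2 hp1, SS_zero] at this
    apply mul_left_cancel₀ hpos.ne'
    linarith
  obtain ⟨r0, r1, r2⟩ := arith A B _ _ _ hpAB hA e1 e2 (SS_one_mod3 hp1) (SS_one_even hp1 hp2)
  constructor
  · obtain ⟨n, hn⟩ := hg (Units.mk0 c hc)
    have hn' : c = (g : ZMod p) ^ n := by
      have := congrArg (fun u : (ZMod p)ˣ => (u : ZMod p)) hn
      simpa using this.symm
    have hcl : SS c = SS ((g : ZMod p) ^ (n % 3)) := by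
      rw [← SS_cube ((g : ZMod p) ^ (n % 3)) (g ^ (n / 3)) (pow_ne_zero _ g.ne_zero), hn']
      congr 1
      rw [← pow_mul, ← pow_add]; congr 1; omega
    have : n % 3 < 3 := Nat.mod_lt _ (by norm_num)
    rw [hcl]
    interval_cases n % 3
    · left; simpa using r0
    · right; simpa using r1
    · right; simpa using r2
  · rw [SS_mod g ho hp1 hp2 c, r0]; push_cast; ring

/-- the number of solutions of the curve equation -/
lemma T_eq (hp2 : p ≠ 2) (a : ZMod p) (ha : a ≠ 0) :
    ((univ.filter (fun z : ZMod p × ZMod p => z.1 * z.2 * (z.1 + z.2) = a)).card : ℤ) =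
      p - 2 + SS (4 * a) := by
  have h20 : (2 : ZMod p) ≠ 0 := by
    intro h
    have : ((2 : ℕ) : ZMod p) = 0 := by exact_mod_cast h
    rw [ZMod.natCast_eq_zero_iff] at this
    exact hp2 ((Nat.prime_dvd_prime_iff_eq hp.out Nat.prime_two).mp this)
  have hb : (univ.filter (fun z : ZMod p × ZMod p => z.1 * z.2 * (z.1 + z.2) = a)).card =
      (univ.filter (fun z : ZMod p × ZMod p => z.1 ≠ 0 ∧ z.2 ^ 2 = 1 - 4 * a * z.1 ^ 3)).card := by
    refine card_bij' (fun z _ => ((z.1 + z.2)⁻¹, (z.1 - z.2) / (z.1 + z.2)))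
      (fun w _ => ((1 + w.2) / (2 * w.1), (1 - w.2) / (2 * w.1))) ?_ ?_ ?_ ?_
    · rintro ⟨x, y⟩ h
      simp only [mem_filter, mem_univ, true_and] at h ⊢
      have hs : x + y ≠ 0 := by intro h0; rw [h0] at h; simp at h; exact ha h.symm
      refine ⟨inv_ne_zero hs, ?_⟩
      field_simp
      rw [← h]; ring
    · rintro ⟨r, u⟩ h
      simp only [mem_filter, mem_univ, true_and] at h ⊢
      obtain ⟨hr, h⟩ := h
      field_simp
      linear_combination (-2) * h
    · rintro ⟨x, y⟩ h
      simp only [mem_filter, mem_univ, true_and] at h ⊢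
      have hs : x + y ≠ 0 := by intro h0; rw [h0] at h; simp at h; exact ha h.symm
      ext <;> simp only <;> field_simp <;> ring
    · rintro ⟨r, u⟩ h
      simp only [mem_filter, mem_univ, true_and] at h ⊢
      obtain ⟨hr, h⟩ := h
      have e : (1 + u) / (2 * r) + (1 - u) / (2 * r) = r⁻¹ := by field_simp; ring
      rw [e]
      ext <;> simp only
      · simp
      · field_simp; ring
  rw [hb, card_filter]
  push_cast
  rw [Fintype.sum_prod_type]
  have h1 : ∀ r : ZMod p, (∑ u : ZMod p, if (r ≠ 0 ∧ u ^ 2 = 1 - 4 * a * r ^ 3) then (1 : ℤ) else 0) =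
      (1 + quadraticChar (ZMod p) (1 - 4 * a * r ^ 3)) - if r = 0 then 2 else 0 := by
    intro r
    by_cases hr : r = 0
    · subst hr; simp
    · have := quadraticChar_card_sqrts (F := ZMod p) (by rwa [ZMod.ringChar_zmod_n]) (1 - 4 * a * r ^ 3)
      rw [if_neg hr, sub_zero, add_comm, ← this, ← sum_filter]
      simp only [sum_const, nsmul_eq_mul, mul_one]
      congr 2
      ext u
      simp [hr]
  simp only [h1]
  rw [sum_sub_distrib, sum_add_distrib]
  unfold SS
  simp
  ring

lemma fib_double {F : Type*} [Field F] [Fintype F] [DecidableEq F] (h2 : (2 : F) ≠ 0) (h3 : (3 : F) ≠ 0)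
    (a b x : F) (ha : a ≠ 0) (hx : x ^ 3 + a = b * x) (hd : 2 * x ^ 3 = a) :
    (univ.filter (fun z : F × F => z.1 ^ 3 + a = b * z.1 ∧ z.1 * z.2 * (z.1 + z.2) = a)).card + 3
      = 3 * (univ.filter (fun z : F => z ^ 3 + a = b * z)).card := by
  have hx0 : x ≠ 0 := by rintro rfl; simp at hd; exact ha hd.symm
  have hb : b = 3 * x ^ 2 := by
    apply mul_right_cancel₀ hx0; rw [← hx, ← hd]; ring
  subst hb
  subst hd
  have hroot : ∀ z : F, z ^ 3 + 2 * x ^ 3 = 3 * x ^ 2 * z ↔ z = x ∨ z = -2 * x := by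
    intro z
    constructor
    · intro h
      have : (z - x) ^ 2 * (z + 2 * x) = 0 := by linear_combination h
      rcases mul_eq_zero.mp this with h | h
      · left; exact sub_eq_zero.mp (pow_eq_zero_iff (two_ne_zero) |>.mp h)
      · right; linear_combination h
    · rintro (rfl | rfl) <;> ring
  have hne : x ≠ -2 * x := by
    intro h; exact mul_ne_zero h3 hx0 (by linear_combination h)
  have hR : univ.filter (fun z : F => z ^ 3 + 2 * x ^ 3 = 3 * x ^ 2 * z) = {x, -2 * x} := by
    ext z; simp only [mem_filter, mem_univ, true_and, mem_insert, mem_singleton, hroot]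
  have hP : univ.filter (fun z : F × F => z.1 ^ 3 + 2 * x ^ 3 = 3 * x ^ 2 * z.1 ∧
      z.1 * z.2 * (z.1 + z.2) = 2 * x ^ 3) = {(x, x), (x, -2 * x), (-2 * x, x)} := by
    ext ⟨u, v⟩
    simp only [mem_filter, mem_univ, true_and, mem_insert, mem_singleton, hroot, Prod.mk.injEq]
    constructor
    · rintro ⟨rfl | rfl, h⟩
      · have : (v - u) * (v + 2 * u) = 0 := by
          apply mul_left_cancel₀ hx0; linear_combination h
        rcases mul_eq_zero.mp this with h | h
        · left; exact ⟨rfl, sub_eq_zero.mp h⟩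
        · right; left; exact ⟨rfl, by linear_combination h⟩
      · have : (v - x) ^ 2 = 0 := by
          apply mul_left_cancel₀ (mul_ne_zero h2 hx0); linear_combination -h
        right; right; exact ⟨rfl, sub_eq_zero.mp (pow_eq_zero_iff (two_ne_zero) |>.mp this)⟩
    · rintro (⟨rfl, rfl⟩ | ⟨rfl, rfl⟩ | ⟨rfl, rfl⟩)
      · exact ⟨Or.inl rfl, by ring⟩
      · exact ⟨Or.inl rfl, by ring⟩
      · exact ⟨Or.inr rfl, by ring⟩
  rw [hR, hP, card_pair hne, card_insert_of_notMem, card_pair]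
  · simp only [ne_eq, Prod.mk.injEq, not_and]
    exact fun h => absurd h hne
  · simp only [mem_insert, mem_singleton, Prod.mk.injEq, not_or, not_and]
    exact ⟨fun _ => hne, fun h => absurd h hne⟩

lemma fib_all {F : Type*} [Field F] [Fintype F] [DecidableEq F] (h2 : (2 : F) ≠ 0) (h3 : (3 : F) ≠ 0)
    (a b : F) (ha : a ≠ 0) :
    (univ.filter (fun z : F × F => z.1 ^ 3 + a = b * z.1 ∧ z.1 * z.2 * (z.1 + z.2) = a)).card +
      3 * (if ∃ x : F, x ^ 3 + a = b * x then 1 else 0)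
      = 3 * (univ.filter (fun z : F => z ^ 3 + a = b * z)).card := by
  split_ifs with he
  · obtain ⟨x, hx⟩ := he
    have hx0 : x ≠ 0 := by rintro rfl; simp at hx; exact ha hx
    by_cases hy : ∃ y, x * y * (x + y) = a
    · obtain ⟨y, hy⟩ := hy
      have hb : b = x ^ 2 + x * y + y ^ 2 := by
        apply mul_right_cancel₀ hx0; rw [← hx, ← hy]; ring
      have hy0 : y ≠ 0 := by rintro rfl; simp at hy; exact ha hy.symm
      by_cases h1 : x = y
      · exact fib_double h2 h3 a b x ha hx (by rw [← hy, ← h1]; ring)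
      by_cases h4 : x = -x - y
      · have h5 : y = -2 * x := by linear_combination h4
        exact fib_double h2 h3 a b x ha hx (by rw [← hy, h5]; ring)
      by_cases h6 : y = -x - y
      · have h5 : x = -2 * y := by linear_combination h6
        exact fib_double h2 h3 a b y ha (by rw [hb, ← hy]; ring) (by rw [← hy, h5]; ring)
      have hroot : ∀ z : F, z ^ 3 + a = b * z ↔ z = x ∨ z = y ∨ z = -x - y := by
        intro z
        subst hb; subst hy
        constructor
        · intro h
          have : (z - x) * ((z - y) * (z - (-x - y))) = 0 := by linear_combination h
          simpa [mul_eq_zero, sub_eq_zero] using this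
        · rintro (rfl | rfl | rfl) <;> ring
      set w := -x - y with hw
      have hw0 : w ≠ 0 := by
        intro h0
        have : x + y = 0 := by linear_combination -h0
        rw [this] at hy; simp at hy; exact ha hy.symm
      have hR : univ.filter (fun z : F => z ^ 3 + a = b * z) = {x, y, w} := by
        ext z; simp only [mem_filter, mem_univ, true_and, mem_insert, mem_singleton, hroot]
      have aux : ∀ u v s t : F, u ≠ 0 → s * u * t = -a → u + s + t = 0 → u * v * (u + v) = a →
          v = s ∨ v = t := by
        intro u v s t hu0 hp hs h
        have : (v - s) * (v - t) = 0 := by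
          apply mul_left_cancel₀ hu0; linear_combination h + hp - u * v * hs
        simpa [mul_eq_zero, sub_eq_zero] using this
      have hprod : x * y * w = -a := by rw [← hy, hw]; ring
      have hsum : x + y + w = 0 := by rw [hw]; ring
      have hP : univ.filter (fun z : F × F => z.1 ^ 3 + a = b * z.1 ∧ z.1 * z.2 * (z.1 + z.2) = a)
          = ({x, y, w} : Finset F).offDiag := by
        ext ⟨u, v⟩
        simp only [mem_filter, mem_univ, true_and, mem_offDiag, mem_insert, mem_singleton, hroot]
        constructor
        · rintro ⟨hu, h⟩
          rcases hu with rfl | rfl | rfl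
          · rcases aux _ v y w hx0 (by linear_combination hprod) (by linear_combination hsum) h with rfl | rfl
            <;> simp_all
          · rcases aux _ v x w hy0 (by linear_combination hprod) (by linear_combination hsum) h with rfl | rfl
            <;> simp_all [Ne.symm h1]
          · rcases aux _ v x y hw0 (by linear_combination hprod) (by linear_combination hsum) h with rfl | rfl
            · exact ⟨by simp, by simp, Ne.symm h4⟩
            · exact ⟨by simp, by simp, Ne.symm h6⟩
        · rintro ⟨hu, hv, hne⟩
          refine ⟨hu, ?_⟩
          rcases hu with rfl | rfl | rfl <;> rcases hv with rfl | rfl | rfl <;>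
            first
              | exact absurd rfl hne
              | (linear_combination hy)
              | (rw [hw, ← hy]; ring)
      have hc : ({x, y, w} : Finset F).card = 3 := by
        rw [card_eq_three]; exact ⟨x, y, w, h1, h4, h6, rfl⟩
      rw [hR, hP, offDiag_card, hc]
    · have hroot : ∀ z : F, z ^ 3 + a = b * z ↔ z = x := by
        intro z
        constructor
        · intro h
          by_contra hne
          apply hy
          refine ⟨z, ?_⟩
          apply mul_left_cancel₀ (sub_ne_zero.mpr hne)
          linear_combination x * h - z * hx
        · rintro rfl; exact hx
      have hR : univ.filter (fun z : F => z ^ 3 + a = b * z) = {x} := by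
        ext z; simp only [mem_filter, mem_univ, true_and, mem_singleton, hroot]
      have hP : univ.filter (fun z : F × F => z.1 ^ 3 + a = b * z.1 ∧ z.1 * z.2 * (z.1 + z.2) = a) = ∅ := by
        ext ⟨u, v⟩
        simp only [mem_filter, mem_univ, true_and, hroot, notMem_empty, iff_false, not_and]
        rintro rfl h; exact hy ⟨v, h⟩
      rw [hR, hP]; simp
  · push Not at he
    have hR : univ.filter (fun z : F => z ^ 3 + a = b * z) = ∅ := by
      ext z; simp [he z]
    have hP : univ.filter (fun z : F × F => z.1 ^ 3 + a = b * z.1 ∧ z.1 * z.2 * (z.1 + z.2) = a) = ∅ := by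
      ext z; simp [he z.1]
    rw [hR, hP]; simp

lemma V_eq {F : Type*} [Field F] [Fintype F] [DecidableEq F] (h2 : (2 : F) ≠ 0) (h3 : (3 : F) ≠ 0)
    (a : F) (ha : a ≠ 0) :
    (univ.filter (fun z : F × F => z.1 * z.2 * (z.1 + z.2) = a)).card +
      3 * (univ.filter (fun b : F => ∃ x : F, x ^ 3 + a = b * x)).card = 3 * (Fintype.card F - 1) := by
  have h := sum_congr rfl (fun b (_ : b ∈ (univ : Finset F)) => fib_all h2 h3 a b ha)
  rw [sum_add_distrib, ← mul_sum, ← mul_sum, ← card_filter] at h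
  have hb : ∀ x b : F, x ≠ 0 → (x ^ 3 + a = b * x ↔ (x ^ 3 + a) / x = b) := by
    intro x b hx; rw [div_eq_iff hx]
  have e1 : ∑ b : F, (univ.filter (fun z : F × F => z.1 ^ 3 + a = b * z.1 ∧ z.1 * z.2 * (z.1 + z.2) = a)).card
      = (univ.filter (fun z : F × F => z.1 * z.2 * (z.1 + z.2) = a)).card := by
    rw [card_eq_sum_card_fiberwise (f := fun z : F × F => (z.1 ^ 3 + a) / z.1) (t := univ) (by simp)]
    refine sum_congr rfl (fun b _ => ?_)
    congr 1
    ext z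
    simp only [mem_filter, mem_univ, true_and]
    constructor
    · rintro ⟨h, h'⟩
      have : z.1 ≠ 0 := by intro h0; rw [h0] at h'; simp at h'; exact ha h'.symm
      exact ⟨h', (hb _ _ this).mp h⟩
    · rintro ⟨h', h⟩
      have : z.1 ≠ 0 := by intro h0; rw [h0] at h'; simp at h'; exact ha h'.symm
      exact ⟨(hb _ _ this).mpr h, h'⟩
  have e2 : ∑ b : F, (univ.filter (fun z : F => z ^ 3 + a = b * z)).card = Fintype.card F - 1 := by
    rw [← card_univ, ← card_erase_of_mem (mem_univ (0 : F)),
      card_eq_sum_card_fiberwise (f := fun z : F => (z ^ 3 + a) / z) (t := univ) (by simp)]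
    refine sum_congr rfl (fun b _ => ?_)
    congr 1
    ext z
    simp only [mem_filter, mem_univ, true_and, mem_erase, and_true]
    constructor
    · intro h
      have : z ≠ 0 := by rintro rfl; simp at h; exact ha h
      exact ⟨this, (hb _ _ this).mp h⟩
    · rintro ⟨h', h⟩; exact (hb _ _ h').mpr h
  rw [e1, e2] at h
  exact h

lemma V_conv (a : ℤ) (ha : (a : ZMod p) ≠ 0) :
    ((Finset.range p).filter (fun b : ℕ =>
      ∃ x ∈ Finset.Icc 1 (p - 1),
        (x : ℤ) ^ 3 + (a) ≡ (b : ℤ) * (x : ℤ) [ZMOD (p : ℤ)])).card =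
    (univ.filter (fun b : ZMod p => ∃ x : ZMod p, x ^ 3 + (a : ZMod p) = b * x)).card := by
  have hpp := hp.out.pos
  have key : ∀ b x : ℕ, ((x : ℤ) ^ 3 + (a) ≡ (b : ℤ) * (x : ℤ) [ZMOD (p : ℤ)]) ↔
      (x : ZMod p) ^ 3 + (a : ZMod p) = (b : ZMod p) * (x : ZMod p) := by
    intro b x
    rw [← ZMod.intCast_eq_intCast_iff]; push_cast; rfl
  simp only [key]
  refine card_bij' (fun b _ => (b : ZMod p)) (fun b _ => b.val) ?_ ?_ ?_ ?_
  · intro b hb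
    simp only [mem_filter, mem_univ, true_and] at hb ⊢
    obtain ⟨_, x, _, hx⟩ := hb
    exact ⟨x, hx⟩
  · intro b hb
    simp only [mem_filter, mem_univ, true_and, mem_range, mem_Icc] at hb ⊢
    obtain ⟨x, hx⟩ := hb
    refine ⟨ZMod.val_lt b, x.val, ?_, ?_⟩
    · have hx0 : x ≠ 0 := by rintro rfl; simp at hx; exact ha hx
      have h1 : x.val ≠ 0 := by rwa [Ne, ZMod.val_eq_zero]
      have := ZMod.val_lt x
      omega
    · simpa using hx
  · intro b hb
    simp only [mem_filter, mem_range] at hb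
    exact ZMod.val_cast_of_lt hb.1
  · intro b hb
    simp

end helpers

theorem stmt_1 (p : ℕ) [hp : Fact p.Prime] (hp1 : p % 3 = 1)
    (A B : ℤ) (hpAB : (p : ℤ) = A ^ 2 + 3 * B ^ 2) (hA : A % 3 = 1)
    (a : ℤ) (ha : ¬ (p : ℤ) ∣ a) :
    (((2 * a ^ 2 : ℤ) : ZMod p) ^ ((p - 1) / 3) = 1 →
      3 * (((Finset.range p).filter (fun b : ℕ =>
      ∃ x ∈ Finset.Icc 1 (p - 1),
        (x : ℤ) ^ 3 + (a) ≡ (b : ℤ) * (x : ℤ) [ZMOD (p : ℤ)])).card : ℤ) = 2 * (p : ℤ) - 1 + 2 * A) ∧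
    (((2 * a ^ 2 : ℤ) : ZMod p) ^ ((p - 1) / 3) = (-1 + (A : ZMod p) * (B : ZMod p)⁻¹) / 2 →
      3 * (((Finset.range p).filter (fun b : ℕ =>
      ∃ x ∈ Finset.Icc 1 (p - 1),
        (x : ℤ) ^ 3 + (a) ≡ (b : ℤ) * (x : ℤ) [ZMOD (p : ℤ)])).card : ℤ) = 2 * (p : ℤ) - 1 - A + 3 * B) ∧
    (((2 * a ^ 2 : ℤ) : ZMod p) ^ ((p - 1) / 3) = (-1 - (A : ZMod p) * (B : ZMod p)⁻¹) / 2 →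
      3 * (((Finset.range p).filter (fun b : ℕ =>
      ∃ x ∈ Finset.Icc 1 (p - 1),
        (x : ℤ) ^ 3 + (a) ≡ (b : ℤ) * (x : ℤ) [ZMOD (p : ℤ)])).card : ℤ) = 2 * (p : ℤ) - 1 - A - 3 * B) := by
  have h2p := hp.out.two_le
  have hp2 : p ≠ 2 := by omega
  have hp3 : p ≠ 3 := by omega
  have nz : ∀ q : ℕ, q.Prime → p ≠ q → ((q : ℕ) : ZMod p) ≠ 0 := by
    intro q hq hne h
    rw [ZMod.natCast_eq_zero_iff] at h
    exact hne ((Nat.prime_dvd_prime_iff_eq hp.out hq).mp h)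
  have h2 : (2 : ZMod p) ≠ 0 := by exact_mod_cast nz 2 Nat.prime_two hp2
  have h3 : (3 : ZMod p) ≠ 0 := by exact_mod_cast nz 3 Nat.prime_three hp3
  have ha0 : (a : ZMod p) ≠ 0 := by rwa [Ne, ZMod.intCast_zmod_eq_zero_iff_dvd]
  have h4 : (4 : ZMod p) ≠ 0 := by
    have : (4 : ZMod p) = 2 * 2 := by norm_num
    rw [this]; exact mul_ne_zero h2 h2
  have hc0 : (4 * a : ZMod p) ≠ 0 := mul_ne_zero h4 ha0
  have hsq : (A : ZMod p) ^ 2 + 3 * (B : ZMod p) ^ 2 = 0 := by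
    have := congrArg (fun z : ℤ => (z : ZMod p)) hpAB
    push_cast at this
    rw [← this]; simp
  have hB0 : (B : ZMod p) ≠ 0 := by
    intro h
    have hB : (p : ℤ) ∣ B := (ZMod.intCast_zmod_eq_zero_iff_dvd B p).mp h
    have hpos : (0 : ℤ) < p := by exact_mod_cast hp.out.pos
    have hB1 : B = 0 := by
      refine Int.eq_zero_of_abs_lt_dvd hB ?_
      apply abs_lt_of_sq_lt_sq _ hpos.le
      by_contra hc
      have : (2 : ℤ) ≤ p := by exact_mod_cast h2p
      nlinarith [sq_nonneg A]
    subst hB1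
    have hpp : Prime (p : ℤ) := Nat.prime_iff_prime_int.mp hp.out
    have : (p : ℤ) = A ^ 2 := by rw [hpAB]; ring
    rw [this] at hpp
    exact not_prime_pow (by norm_num) hpp
  have hAB : (A : ZMod p) ^ 2 ≠ (B : ZMod p) ^ 2 := by
    intro h
    apply mul_ne_zero h4 (pow_ne_zero 2 hB0)
    linear_combination hsq - h
  obtain ⟨hv, hm⟩ := SS_main hp1 A B hpAB hA _ hc0
  have hV := V_eq h2 h3 (a : ZMod p) ha0
  have hT := T_eq hp2 (a : ZMod p) ha0
  rw [← V_conv a ha0, ZMod.card] at hV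
  set V := ((Finset.range p).filter (fun b : ℕ =>
      ∃ x ∈ Finset.Icc 1 (p - 1),
        (x : ℤ) ^ 3 + (a) ≡ (b : ℤ) * (x : ℤ) [ZMOD (p : ℤ)])).card with hVdef
  have h3V : 3 * (V : ℤ) = 2 * p - 1 - SS (4 * a : ZMod p) := by omega
  have hχ : (((2 * a ^ 2 : ℤ) : ZMod p) ^ ((p - 1) / 3)) ^ 2 = (4 * a : ZMod p) ^ ((p - 1) / 3) := by
    have e : (((2 * a ^ 2 : ℤ) : ZMod p)) ^ 2 = (4 * a) * (a : ZMod p) ^ 3 := by push_cast; ring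
    rw [← pow_mul, mul_comm _ 2, pow_mul, e, mul_pow, ← pow_mul, show 3 * ((p - 1) / 3) = p - 1 by omega,
      ZMod.pow_card_sub_one_eq_one ha0, mul_one]
  rw [← hχ] at hm
  generalize ((2 * a ^ 2 : ℤ) : ZMod p) ^ ((p - 1) / 3) = χ at hm ⊢
  rw [h3V]
  have hBB : (B : ZMod p) * (B : ZMod p)⁻¹ = 1 := mul_inv_cancel₀ hB0
  have c1 : ((-2 * A : ℤ) : ZMod p) ≠ ((A + 3 * B : ℤ) : ZMod p) := by
    intro h; push_cast at h
    have : (A : ZMod p) + B = 0 := by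
      apply mul_left_cancel₀ h3; linear_combination -h
    apply hAB; linear_combination (A - B : ZMod p) * this
  have c2 : ((-2 * A : ℤ) : ZMod p) ≠ ((A - 3 * B : ℤ) : ZMod p) := by
    intro h; push_cast at h
    have : (A : ZMod p) - B = 0 := by
      apply mul_left_cancel₀ h3; linear_combination -h
    apply hAB; linear_combination (A + B : ZMod p) * this
  have c3 : ((A + 3 * B : ℤ) : ZMod p) ≠ ((A - 3 * B : ℤ) : ZMod p) := by
    intro h; push_cast at h
    apply mul_ne_zero (mul_ne_zero h2 h3) hB0; linear_combination h
  have hi : (A : ZMod p) * (B : ZMod p)⁻¹ * B = A := by field_simp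
  generalize hI : (A : ZMod p) * (B : ZMod p)⁻¹ = I at hi ⊢
  have hI2 : I ^ 2 = -3 := by
    apply mul_right_cancel₀ (pow_ne_zero 2 hB0)
    linear_combination (I * B + A) * hi + hsq
  have hIA : I * A = -3 * B := by rw [← hi]; linear_combination B * hI2
  refine ⟨fun h => ?_, fun h => ?_, fun h => ?_⟩
  · have hs : ((SS (4 * a : ZMod p) : ℤ) : ZMod p) = ((-2 * A : ℤ) : ZMod p) := by
      rw [hm, h]; push_cast; ring
    rcases hv with e | e | e <;> rw [e] at hs ⊢
    · ring
    · exact absurd hs.symm c1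
    · exact absurd hs.symm c2
  · have hs : ((SS (4 * a : ZMod p) : ℤ) : ZMod p) = ((A - 3 * B : ℤ) : ZMod p) := by
      rw [hm, h]; push_cast; field_simp; linear_combination (-A : ZMod p) * hI2 + 2 * hIA
    rcases hv with e | e | e <;> rw [e] at hs ⊢
    · exact absurd hs c2
    · exact absurd hs c3
    · ring
  · have hs : ((SS (4 * a : ZMod p) : ℤ) : ZMod p) = ((A + 3 * B : ℤ) : ZMod p) := by
      rw [hm, h]; push_cast; field_simp; linear_combination (-A : ZMod p) * hI2 - 2 * hIA
    rcases hv with e | e | e <;> rw [e] at hs ⊢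
    · exact absurd hs c1
    · ring
    · exact absurd hs.symm c3
end

section
/- Let p be a prime with p ≡ 1 (mod 3), write p = A² + 3B² with integers A, B and A ≡ 1 (mod 3), and let a be an integer with p ∤ a. If a^((p−1)/3) ≡ 1 (mod p), then V_p(x² + 2a/x) = (2p − 1 + 2A)/3; if a^((p−1)/3) ≡ (−1 − A·B⁻¹)/2 (mod p), then V_p(x² + 2a/x) = (2p − 1 − A + 3B)/3; and if a^((p−1)/3) ≡ (−1 + A·B⁻¹)/2 (mod p), then V_p(x² + 2a/x) = (2p − 1 − A − 3B)/3. -/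
open Finset

section
variable {p : ℕ} [hp : Fact p.Prime] {K : Type*} [Field K]

lemma aux_cube_iff (ψ : ZMod p →* K) (h3 : ∀ x ≠ 0, ψ x ^ 3 = 1)
    (hne : ∃ g, g ≠ 0 ∧ ψ g ≠ 1) (d : ZMod p) (hd : d ≠ 0) :
    ψ d = 1 ↔ ∃ e, e ^ 3 = d := by
  constructor
  · intro h
    obtain ⟨g, hg⟩ := IsCyclic.exists_monoid_generator (α := (ZMod p)ˣ)
    have hpow : ∀ x : ZMod p, x ≠ 0 → ∃ k : ℕ, (g : ZMod p) ^ k = x := by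
      intro x hx
      obtain ⟨k, hk⟩ := hg (Units.mk0 x hx)
      refine ⟨k, ?_⟩
      have := congrArg Units.val hk
      simpa using this
    have hg1 : ψ g ≠ 1 := by
      intro h1
      obtain ⟨x, hx, hx1⟩ := hne
      obtain ⟨k, hk⟩ := hpow x hx
      apply hx1
      rw [← hk, map_pow, h1, one_pow]
    obtain ⟨k, hk⟩ := hpow d hd
    have ho : orderOf (ψ g) = 3 := orderOf_eq_prime (h3 _ g.ne_zero) hg1
    rw [← hk, map_pow] at h
    have := orderOf_dvd_of_pow_eq_one h
    rw [ho] at this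
    obtain ⟨j, rfl⟩ := this
    exact ⟨(g : ZMod p) ^ j, by rw [← hk]; ring⟩
  · rintro ⟨e, rfl⟩
    rw [map_pow]
    exact h3 _ (by rintro rfl; simp at hd)

lemma aux_omega (hp1 : p % 3 = 1) : ∃ w : ZMod p, w ≠ 1 ∧ w ^ 2 + w + 1 = 0 := by
  have hc : 3 ∣ Fintype.card (ZMod p)ˣ := by
    rw [ZMod.card_units]; omega
  obtain ⟨w, hw⟩ := exists_prime_orderOf_dvd_card 3 hc
  have h1 : (w : ZMod p) ≠ 1 := by
    intro h
    have : w = 1 := Units.ext h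
    rw [this] at hw; simp at hw
  refine ⟨w, h1, ?_⟩
  have h3 : (w : ZMod p) ^ 3 = 1 := by
    have := pow_orderOf_eq_one w
    rw [hw] at this
    have h := congrArg Units.val this
    rw [Units.val_pow_eq_pow_val] at h
    simpa using h
  have : ((w : ZMod p) - 1) * ((w:ZMod p) ^ 2 + w + 1) = 0 := by linear_combination h3
  exact (mul_eq_zero.mp this).resolve_left (sub_ne_zero.mpr h1)

lemma aux_three (hp1 : p % 3 = 1) : (3 : ZMod p) ≠ 0 := by
  have : ((3 : ℕ) : ZMod p) ≠ 0 := by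
    rw [Ne, ZMod.natCast_eq_zero_iff]
    intro h
    have := (Nat.prime_dvd_prime_iff_eq hp.out Nat.prime_three).mp h
    omega
  exact_mod_cast this

lemma aux_two (hp2 : p ≠ 2) : (2 : ZMod p) ≠ 0 := by
  have : ((2 : ℕ) : ZMod p) ≠ 0 := by
    rw [Ne, ZMod.natCast_eq_zero_iff]
    intro h
    exact hp2 ((Nat.prime_dvd_prime_iff_eq hp.out Nat.prime_two).mp h)
  exact_mod_cast this

lemma aux_roots (hp1 : p % 3 = 1) (e : ZMod p) (he : e ≠ 0) :
    (univ.filter (fun x : ZMod p => x ^ 3 = e ^ 3)).card = 3 := by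
  obtain ⟨w, hw1, hw⟩ := aux_omega (p := p) hp1
  have h3 := aux_three (p := p) hp1
  have hs : univ.filter (fun x : ZMod p => x ^ 3 = e ^ 3) = {e, w * e, w ^ 2 * e} := by
    ext x
    simp only [mem_filter, mem_univ, true_and, mem_insert, mem_singleton]
    constructor
    · intro h
      have : (x - e) * ((x - w * e) * (x - w ^ 2 * e)) = 0 := by
        linear_combination h + (x - e) * (-e * x + (w - 1) * e ^ 2) * hw
      rcases mul_eq_zero.mp this with h | h
      · exact Or.inl (sub_eq_zero.mp h)
      · rcases mul_eq_zero.mp h with h | h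
        · exact Or.inr (Or.inl (sub_eq_zero.mp h))
        · exact Or.inr (Or.inr (sub_eq_zero.mp h))
    · have hw3 : w ^ 3 = 1 := by linear_combination (w - 1) * hw
      rintro (rfl | rfl | rfl)
      · rfl
      · linear_combination e ^ 3 * hw3
      · linear_combination (e ^ 3 * (w ^ 3 + 1)) * hw3
  have hw0 : w ≠ 0 := by rintro rfl; simp at hw
  rw [hs, card_eq_three]
  refine ⟨_, _, _, ?_, ?_, ?_, rfl⟩
  · intro h
    apply hw1
    exact (mul_right_cancel₀ he (by linear_combination h)).symm
  · intro h
    have : (w ^ 2) = 1 := (mul_right_cancel₀ he (by linear_combination -h))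
    have h2 : w = -2 := by linear_combination hw - this
    apply h3; rw [h2] at this; linear_combination this
  · intro h
    have : w = 1 := by
      have := mul_right_cancel₀ he h
      apply mul_left_cancel₀ hw0; linear_combination -this
    exact hw1 this

lemma aux_count (hp1 : p % 3 = 1) (ψ : ZMod p →* K) (h3 : ∀ x ≠ 0, ψ x ^ 3 = 1)
    (hne : ∃ g, g ≠ 0 ∧ ψ g ≠ 1) (d : ZMod p) (hd : d ≠ 0) :
    ((univ.filter (fun x : ZMod p => x ^ 3 = d)).card : K) = 1 + ψ d + ψ d ^ 2 := by
  by_cases h : ψ d = 1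
  · obtain ⟨e, rfl⟩ := (aux_cube_iff ψ h3 hne d hd).mp h
    rw [aux_roots hp1 e (by rintro rfl; simp at hd), h]; norm_num
  · have h0 : (univ.filter (fun x : ZMod p => x ^ 3 = d)) = ∅ := by
      apply filter_eq_empty_iff.mpr
      intro x _ hx
      exact h ((aux_cube_iff ψ h3 hne d hd).mpr ⟨x, hx⟩)
    rw [h0]
    have : (ψ d - 1) * (1 + ψ d + ψ d ^ 2) = 0 := by linear_combination h3 d hd
    simp [(mul_eq_zero.mp this).resolve_left (sub_ne_zero.mpr h)]


/-- The number of affine points on `x y (x + y) = c`. -/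
def auxM (p : ℕ) [Fact p.Prime] (c : ZMod p) : ℕ :=
  (univ.filter (fun q : ZMod p × ZMod p => q.1 * q.2 * (q.1 + q.2) = c)).card

lemma auxM_sum (c : ZMod p) (hc : c ≠ 0) :
    auxM p c = ∑ u : ZMod p, (univ.filter (fun x : ZMod p => x ^ 3 * (u * (u + 1)) = c)).card := by
  unfold auxM
  rw [← card_sigma]
  refine card_bij' (fun q _ => ⟨q.2 / q.1, q.1⟩) (fun s _ => (s.2, s.2 * s.1)) ?_ ?_ ?_ ?_
  · rintro ⟨x, y⟩ h
    simp only [mem_filter, mem_univ, true_and, mem_sigma] at h ⊢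
    have hx : x ≠ 0 := by rintro rfl; simp at h; exact hc h.symm
    rw [← h]; field_simp; ring
  · rintro ⟨u, x⟩ h
    simp only [mem_filter, mem_univ, true_and, mem_sigma] at h ⊢
    rw [← h]; ring
  · rintro ⟨x, y⟩ h
    simp only [mem_filter, mem_univ, true_and] at h
    have hx : x ≠ 0 := by rintro rfl; simp at h; exact hc h.symm
    simp [mul_div_cancel₀, hx]
  · rintro ⟨u, x⟩ h
    simp only [mem_filter, mem_univ, true_and, mem_sigma] at h
    have hx : x ≠ 0 := by rintro rfl; simp at h; exact hc h.symm
    simp [hx]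

lemma auxM_char (hp1 : p % 3 = 1) (ψ : ZMod p →* K) (h3 : ∀ x ≠ 0, ψ x ^ 3 = 1)
    (hne : ∃ g, g ≠ 0 ∧ ψ g ≠ 1) (h0 : ψ 0 = 0) (c : ZMod p) (hc : c ≠ 0) :
    (auxM p c : K) = (p : K) - 2 + ψ c * (∑ u : ZMod p, ψ (u * (u + 1)) ^ 2)
      + ψ c ^ 2 * (∑ u : ZMod p, ψ (u * (u + 1))) := by
  rw [auxM_sum c hc, Nat.cast_sum]
  have key : ∀ u : ZMod p,
      ((univ.filter (fun x : ZMod p => x ^ 3 * (u * (u + 1)) = c)).card : K) =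
      (1 - (if u = 0 then 1 else 0) - (if u = -1 then 1 else 0)) + ψ c * ψ (u * (u + 1)) ^ 2
        + ψ c ^ 2 * ψ (u * (u + 1)) := by
    intro u
    by_cases hu : u * (u + 1) = 0
    · have h1 : (1 : K) - (if u = 0 then 1 else 0) - (if u = -1 then 1 else 0) = 0 := by
        rcases mul_eq_zero.mp hu with h | h
        · simp [h]
        · have : u = -1 := by linear_combination h
          simp [this]
      rw [h1, hu, h0]
      simp [hc.symm]
    · have hu0 : u ≠ 0 := by rintro rfl; simp at hu
      have hu1 : u ≠ -1 := by rintro rfl; simp at hu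
      have e : (univ.filter (fun x : ZMod p => x ^ 3 * (u * (u + 1)) = c))
          = (univ.filter (fun x : ZMod p => x ^ 3 = c / (u * (u + 1)))) := by
        ext x
        simp only [mem_filter, mem_univ, true_and]
        exact (eq_div_iff hu).symm
      have hd : c / (u * (u + 1)) ≠ 0 := div_ne_zero hc hu
      have hψ : ψ (c / (u * (u + 1))) = ψ c * ψ (u * (u + 1)) ^ 2 := by
        have h1 : ψ (c / (u * (u + 1))) * ψ (u * (u + 1)) = ψ c := by
          rw [← map_mul, div_mul_cancel₀ _ hu]
        rw [← h1]
        linear_combination -(ψ (c / (u * (u + 1)))) * h3 _ hu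
      rw [e, aux_count hp1 ψ h3 hne _ hd, hψ, if_neg hu0, if_neg hu1]
      linear_combination ψ c ^ 2 * ψ (u * (u + 1)) * h3 _ hu
  rw [sum_congr rfl (fun u _ => key u)]
  simp only [sum_add_distrib, sum_sub_distrib, ← mul_sum, sum_ite_eq', mem_univ, if_true]
  simp only [sum_const, card_univ, ZMod.card, nsmul_eq_mul, mul_one]
  ring

lemma aux_modp (hp1 : p % 3 = 1) (a b : ZMod p) (ha : a ≠ 0) (hb : b ≠ 0) :
    ((auxM p (b * a) : ZMod p) + 2) = a ^ ((p - 1) / 3) * ((auxM p b : ZMod p) + 2) ∧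
    (a ^ ((p - 1) / 3) = 1 ↔ ∃ e, e ^ 3 = a) := by
  obtain ⟨m, hm⟩ : ∃ m, p = 3 * m + 1 := ⟨p / 3, by omega⟩
  have hm1 : (p - 1) / 3 = m := by omega
  have hm0 : m ≠ 0 := by
    rintro rfl; have := hp.out.one_lt; omega
  rw [hm1]
  let ψ : ZMod p →* ZMod p := powMonoidHom m
  have hψ : ∀ x, ψ x = x ^ m := fun x => rfl
  have h3 : ∀ x ≠ 0, ψ x ^ 3 = 1 := by
    intro x hx
    rw [hψ, ← pow_mul]
    have := ZMod.pow_card_sub_one_eq_one hx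
    rwa [show p - 1 = m * 3 by omega] at this
  have h0 : ψ 0 = 0 := by rw [hψ, zero_pow hm0]
  have hne : ∃ g, g ≠ 0 ∧ ψ g ≠ 1 := by
    obtain ⟨g, hg⟩ := IsCyclic.exists_generator (α := (ZMod p)ˣ)
    refine ⟨g, g.ne_zero, ?_⟩
    intro h
    have h1 : g ^ m = 1 := by
      apply Units.ext; simpa [hψ] using h
    have h2 := orderOf_dvd_of_pow_eq_one h1
    rw [orderOf_eq_card_of_forall_mem_zpowers hg, Nat.card_eq_fintype_card, ZMod.card_units] at h2
    have := Nat.le_of_dvd (by omega) h2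
    omega
  have hJ : ∑ u : ZMod p, ψ (u * (u + 1)) = 0 := by
    have : ∀ u : ZMod p, ψ (u * (u + 1)) = ∑ j ∈ range (m + 1), (m.choose j : ZMod p) * u ^ (m + j) := by
      intro u
      rw [hψ, mul_pow, add_pow, mul_sum]
      refine sum_congr rfl fun j _ => ?_
      rw [pow_add, one_pow]; ring
    rw [sum_congr rfl (fun u _ => this u), sum_comm]
    refine sum_eq_zero fun j hj => ?_
    rw [← mul_sum, FiniteField.sum_pow_lt_card_sub_one, mul_zero]
    rw [ZMod.card]
    have := mem_range.mp hj
    omega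
  refine ⟨?_, aux_cube_iff ψ h3 hne a ha⟩
  rw [auxM_char hp1 ψ h3 hne h0 b hb, auxM_char hp1 ψ h3 hne h0 _ (mul_ne_zero hb ha), hJ, map_mul,
    hψ a, CharP.cast_eq_zero]
  ring

lemma aux_complex (hp1 : p % 3 = 1) :
    ∃ (ψ : ZMod p →* ℂ) (J1 J2 : ℂ), J1 * J2 = p ∧ (∀ x ≠ 0, ψ x ^ 3 = 1) ∧
      (∃ g, g ≠ 0 ∧ ψ g ≠ 1) ∧
      ∀ c ≠ 0, (auxM p c : ℂ) = (p : ℂ) - 2 + ψ c * J2 + ψ c ^ 2 * J1 := by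
  obtain ⟨χ, hχ⟩ := MulChar.exists_mulChar_orderOf (ZMod p) (n := 3)
    (by rw [ZMod.card]; omega) (Complex.isPrimitiveRoot_exp 3 (by norm_num))
  have hχ3 : χ ^ 3 = 1 := by rw [← hχ]; exact pow_orderOf_eq_one χ
  have hχ1 : χ ≠ 1 := by rintro rfl; simp at hχ
  have hχ2 : χ * χ ≠ 1 := by
    intro h
    rw [← pow_two] at h
    have := orderOf_dvd_of_pow_eq_one h
    rw [hχ] at this; norm_num at this
  have hinv : χ⁻¹ = χ ^ 2 := by
    rw [inv_eq_iff_mul_eq_one, ← pow_succ', hχ3]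
  have h3 : ∀ x ≠ 0, χ x ^ 3 = 1 := by
    intro x hx
    rw [← MulChar.pow_apply' χ (by norm_num), hχ3, MulChar.one_apply (IsUnit.mk0 x hx)]
  have hJ := jacobiSum_mul_jacobiSum_inv (F' := ℂ) (F := ZMod p) (by
    rw [ringChar.eq_zero, ZMod.ringChar_zmod_n]; exact hp.out.ne_zero.symm) hχ1 hχ1 hχ2
  have hm1 : χ (-1) = 1 := by
    have h2 : χ (-1) ^ 2 = 1 := by rw [← map_pow]; simp
    have := h3 (-1) (by simp)
    linear_combination this - χ (-1) * h2
  have hs : ∀ u : ZMod p, χ (-u) = χ u := by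
    intro u; rw [neg_eq_neg_one_mul, map_mul, hm1, one_mul]
  have hne : ∃ g, g ≠ 0 ∧ χ g ≠ 1 := by
    by_contra! h
    apply hχ1
    ext x
    rw [h x x.ne_zero, MulChar.one_apply_coe]
  have e1 : ∑ u : ZMod p, χ (u * (u + 1)) = jacobiSum χ χ := by
    unfold jacobiSum
    rw [← Equiv.sum_comp (Equiv.neg (ZMod p))]
    refine sum_congr rfl fun u _ => ?_
    rw [Equiv.neg_apply, map_mul, hs, neg_add_eq_sub]
  have e2 : ∑ u : ZMod p, χ (u * (u + 1)) ^ 2 = jacobiSum χ⁻¹ χ⁻¹ := by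
    unfold jacobiSum
    rw [← Equiv.sum_comp (Equiv.neg (ZMod p)), hinv]
    refine sum_congr rfl fun u _ => ?_
    rw [Equiv.neg_apply, map_mul, hs, neg_add_eq_sub, mul_pow, MulChar.pow_apply' χ (by norm_num),
      MulChar.pow_apply' χ (by norm_num)]
  refine ⟨χ.toMonoidHom, jacobiSum χ χ, jacobiSum χ⁻¹ χ⁻¹, ?_, h3, hne, ?_⟩
  · rw [hJ, ZMod.card]
  · intro c hc
    have := auxM_char hp1 χ.toMonoidHom h3 hne (MulChar.map_zero χ) c hc
    rw [this, ← e1, ← e2]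
    rfl

lemma aux_even (c : ZMod p) (hp2 : p ≠ 2) (hp1 : p % 3 = 1) (e : ZMod p) (he : e ≠ 0) (hc : c = 2 * e ^ 3) :
    Odd (auxM p c) := by
  unfold auxM
  rw [← card_filter_add_card_filter_not (fun q : ZMod p × ZMod p => q.1 = q.2)]
  have h1 : ((univ.filter (fun q : ZMod p × ZMod p => q.1 * q.2 * (q.1 + q.2) = c)).filter
      (fun q => q.1 = q.2)).card = 3 := by
    rw [← aux_roots hp1 e he]
    have h2 := aux_two (p := p) hp2
    refine card_bij' (fun q _ => q.1) (fun x _ => (x, x)) ?_ ?_ ?_ ?_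
    · rintro ⟨x, y⟩ h
      simp only [mem_filter, mem_univ, true_and] at h ⊢
      obtain ⟨h, rfl⟩ := h
      apply mul_left_cancel₀ h2
      rw [← hc, ← h]; ring
    · intro x h
      simp only [mem_filter, mem_univ, true_and] at h ⊢
      rw [hc, ← h]; constructor
      · ring
      · trivial
    · rintro ⟨x, y⟩ h
      simp only [mem_filter, mem_univ, true_and] at h ⊢
      rw [h.2]
    · intro x h
      rfl
  rw [h1]
  apply Odd.add_even (by decide)
  rw [← ZMod.natCast_eq_zero_iff_even, card_eq_sum_ones, Nat.cast_sum]
  refine sum_involution (fun q _ => (q.2, q.1)) ?_ ?_ ?_ ?_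
  · intros; decide
  · rintro ⟨x, y⟩ h _ h2
    simp only [mem_filter, Prod.mk.injEq] at h h2
    exact h.2 h2.2
  · rintro ⟨x, y⟩ h
    simp only [mem_filter, mem_univ, true_and] at h ⊢
    refine ⟨?_, fun h2 => h.2 h2.symm⟩
    rw [← h.1]; ring
  · rintro ⟨x, y⟩ h
    rfl

end

section
variable {p : ℕ} [hp : Fact p.Prime]

lemma aux_fibre (hp1 : p % 3 = 1) (c b : ZMod p) (hc : c ≠ 0) :
    (univ.filter (fun q : ZMod p × ZMod p => q.1 * q.2 * (q.1 + q.2) = c ∧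
      q.1 ^ 2 + q.1 * q.2 + q.2 ^ 2 = b)).card + 3 * (if ∃ x : ZMod p, x ^ 3 + c = b * x then 1 else 0)
    = 3 * (univ.filter (fun x : ZMod p => x ^ 3 + c = b * x)).card := by
  have h3 := aux_three (p := p) hp1
  have nz : ∀ x : ZMod p, x ^ 3 + c = b * x → x ≠ 0 := by
    rintro x h rfl; simp at h; exact hc h
  have q1 : ∀ x y : ZMod p, x * y * (x + y) = c → x ^ 2 + x * y + y ^ 2 = b → x ^ 3 + c = b * x := by
    rintro x y rfl rfl; ring
  have q2 : ∀ x y : ZMod p, x * y * (x + y) = c → x ^ 2 + x * y + y ^ 2 = b → y ^ 3 + c = b * y := by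
    rintro x y rfl rfl; ring
  by_cases hM : ∃ x y : ZMod p, x * y * (x + y) = c ∧ x ^ 2 + x * y + y ^ 2 = b
  · obtain ⟨x, y, h1, h2⟩ := hM
    have hx := nz x (q1 x y h1 h2)
    have hy := nz y (q2 x y h1 h2)
    rw [if_pos ⟨x, q1 x y h1 h2⟩]
    have hR : ∀ t : ZMod p, t ^ 3 + c = b * t ↔ t = x ∨ t = y ∨ t = -(x + y) := by
      intro t
      constructor
      · intro h
        have : (t - x) * ((t - y) * (t - -(x + y))) = 0 := by
          rw [← h1, ← h2] at h
          linear_combination h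
        rcases mul_eq_zero.mp this with h | h
        · exact Or.inl (sub_eq_zero.mp h)
        · rcases mul_eq_zero.mp h with h | h
          · exact Or.inr (Or.inl (sub_eq_zero.mp h))
          · exact Or.inr (Or.inr (sub_eq_zero.mp h))
      · rw [← h1, ← h2]
        rintro (rfl | rfl | rfl) <;> ring
    have hz : x + y ≠ 0 := by
      intro h; rw [h] at h1; simp at h1; exact hc h1.symm
    obtain ⟨z, hzd⟩ : ∃ z, z = -(x + y) := ⟨_, rfl⟩
    have hR' : univ.filter (fun t : ZMod p => t ^ 3 + c = b * t) = {x, y, z} := by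
      ext t; simp [hR, hzd]
    have hP : univ.filter (fun q : ZMod p × ZMod p => q.1 * q.2 * (q.1 + q.2) = c ∧
        q.1 ^ 2 + q.1 * q.2 + q.2 ^ 2 = b)
        = {(x, y), (y, x), (x, z), (z, x), (y, z), (z, y)} := by
      ext ⟨s, t⟩
      simp only [mem_filter, mem_univ, true_and, mem_insert, mem_singleton, Prod.mk.injEq]
      constructor
      · rintro ⟨e1, e2⟩
        have hs := (hR s).mp (q1 s t e1 e2)
        rw [← hzd] at hs
        have hq : s ^ 2 + s * t + t ^ 2 = x ^ 2 + x * y + y ^ 2 := e2.trans h2.symm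
        rcases hs with rfl | rfl | rfl
        · have : (t - y) * (t - z) = 0 := by rw [hzd]; linear_combination hq
          rcases mul_eq_zero.mp this with h | h
          · left; exact ⟨rfl, sub_eq_zero.mp h⟩
          · right; right; left; exact ⟨rfl, sub_eq_zero.mp h⟩
        · have : (t - x) * (t - z) = 0 := by rw [hzd]; linear_combination hq
          rcases mul_eq_zero.mp this with h | h
          · right; left; exact ⟨rfl, sub_eq_zero.mp h⟩
          · right; right; right; right; left; exact ⟨rfl, sub_eq_zero.mp h⟩
        · have : (t - x) * (t - y) = 0 := by
            rw [hzd] at hq; linear_combination hq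
          rcases mul_eq_zero.mp this with h | h
          · right; right; right; left; exact ⟨rfl, sub_eq_zero.mp h⟩
          · right; right; right; right; right; exact ⟨rfl, sub_eq_zero.mp h⟩
      · rw [← h1, ← h2, hzd]
        rintro (⟨rfl, rfl⟩ | ⟨rfl, rfl⟩ | ⟨rfl, rfl⟩ | ⟨rfl, rfl⟩ | ⟨rfl, rfl⟩ | ⟨rfl, rfl⟩) <;>
          constructor <;> ring
    rw [hR', hP]
    have n3 : ∀ t : ZMod p, t ≠ 0 → x = t → y = t → z = t → False := by
      intro t ht hxt hyt hzt
      have : 3 * t = 0 := by linear_combination hzd - hxt - hyt - hzt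
      rcases mul_eq_zero.mp this with h | h
      · exact h3 h
      · exact ht h
    by_cases hxy : x = y
    · have hxz : z ≠ x := fun h => n3 x hx rfl hxy.symm h
      subst hxy
      have : ({(x, x), (x, x), (x, z), (z, x), (x, z), (z, x)} : Finset (ZMod p × ZMod p))
        = {(x, x), (x, z), (z, x)} := by ext q; simp only [mem_insert, mem_singleton]; tauto
      rw [this]
      simp [card_insert_of_notMem, hxz, hxz.symm]
    · by_cases hxz : x = z
      · subst hxz
        have : ({(x, y), (y, x), (x, x), (x, x), (y, x), (x, y)} : Finset (ZMod p × ZMod p))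
          = {(x, y), (y, x), (x, x)} := by ext q; simp only [mem_insert, mem_singleton]; tauto
        rw [this]
        have hyx : y ≠ x := Ne.symm hxy
        have : ({x, y, x} : Finset (ZMod p)) = {x, y} := by
          ext q; simp only [mem_insert, mem_singleton]; tauto
        rw [this]
        simp [card_insert_of_notMem, hxy, hyx]
      · by_cases hyz : y = z
        · subst hyz
          have hyx : y ≠ x := Ne.symm hxy
          have : ({(x, y), (y, x), (x, y), (y, x), (y, y), (y, y)} : Finset (ZMod p × ZMod p))
            = {(x, y), (y, x), (y, y)} := by ext q; simp only [mem_insert, mem_singleton]; tauto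
          rw [this]
          simp [card_insert_of_notMem, hxy, hyx]
        · have hyx : y ≠ x := Ne.symm hxy
          have hzx : z ≠ x := Ne.symm hxz
          have hzy : z ≠ y := Ne.symm hyz
          simp [card_insert_of_notMem, hxy, hyx, hxz, hzx, hyz, hzy]
  · have hP : univ.filter (fun q : ZMod p × ZMod p => q.1 * q.2 * (q.1 + q.2) = c ∧
        q.1 ^ 2 + q.1 * q.2 + q.2 ^ 2 = b) = ∅ := by
      apply filter_eq_empty_iff.mpr
      rintro ⟨x, y⟩ _ h
      exact hM ⟨x, y, h⟩
    rw [hP]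
    by_cases hE : ∃ x : ZMod p, x ^ 3 + c = b * x
    · rw [if_pos hE]
      obtain ⟨x, hx⟩ := hE
      have : univ.filter (fun t : ZMod p => t ^ 3 + c = b * t) = {x} := by
        ext y
        simp only [mem_filter, mem_univ, true_and, mem_singleton]
        constructor
        · intro hy
          by_contra hne
          apply hM
          have hd : y - x ≠ 0 := sub_ne_zero.mpr hne
          have hb : x ^ 2 + x * y + y ^ 2 = b := by
            apply mul_left_cancel₀ hd
            linear_combination hy - hx
          refine ⟨x, y, ?_, hb⟩
          rw [← hb] at hx
          linear_combination -hx
        · rintro rfl; exact hx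
      rw [this]; simp
    · rw [if_neg hE]
      have : univ.filter (fun t : ZMod p => t ^ 3 + c = b * t) = ∅ := by
        apply filter_eq_empty_iff.mpr
        intro x _ h
        exact hE ⟨x, h⟩
      rw [this]; simp

lemma aux_V (hp1 : p % 3 = 1) (c : ZMod p) (hc : c ≠ 0) :
    auxM p c + 3 * (univ.filter (fun b : ZMod p => ∃ x : ZMod p, x ^ 3 + c = b * x)).card + 3
      = 3 * p := by
  have hs := sum_congr rfl (fun b (_ : b ∈ (univ : Finset (ZMod p))) => aux_fibre hp1 c b hc)
  rw [sum_add_distrib, ← mul_sum, ← mul_sum, ← card_filter] at hs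
  have e1 : ∑ b : ZMod p, (univ.filter (fun q : ZMod p × ZMod p => q.1 * q.2 * (q.1 + q.2) = c ∧
      q.1 ^ 2 + q.1 * q.2 + q.2 ^ 2 = b)).card = auxM p c := by
    unfold auxM
    rw [card_eq_sum_card_fiberwise (f := fun q => q.1 ^ 2 + q.1 * q.2 + q.2 ^ 2) (t := univ)
      (fun _ _ => by simp)]
    refine sum_congr rfl fun b _ => ?_
    rw [filter_filter]
  have e2 : ∑ b : ZMod p, (univ.filter (fun x : ZMod p => x ^ 3 + c = b * x)).card = p - 1 := by
    have : (univ.filter (fun x : ZMod p => x ≠ 0)).card = p - 1 := by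
      rw [filter_ne', card_erase_of_mem (mem_univ _), card_univ, ZMod.card]
    rw [← this, card_eq_sum_card_fiberwise (f := fun x => (x ^ 3 + c) / x) (t := univ)
      (fun _ _ => by simp)]
    refine sum_congr rfl fun b _ => ?_
    rw [filter_filter]
    congr 1
    ext x
    simp only [mem_filter, mem_univ, true_and]
    constructor
    · intro h
      have hx : x ≠ 0 := by rintro rfl; simp at h; exact hc h
      exact ⟨hx, (div_eq_iff hx).mpr h⟩
    · rintro ⟨hx, h⟩
      exact (div_eq_iff hx).mp h
  rw [e1, e2] at hs
  have := hp.out.one_lt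
  omega

lemma aux_transfer (a : ℤ) (ha : ((2 * a : ℤ) : ZMod p) ≠ 0) :
    ((Finset.range p).filter (fun b : ℕ =>
      ∃ x ∈ Finset.Icc 1 (p - 1),
        (x : ℤ) ^ 3 + (2 * a) ≡ (b : ℤ) * (x : ℤ) [ZMOD (p : ℤ)])).card
    = (univ.filter (fun b : ZMod p => ∃ x : ZMod p, x ^ 3 + ((2 * a : ℤ) : ZMod p) = b * x)).card := by
  have key : ∀ b x : ℕ, (x : ℤ) ^ 3 + (2 * a) ≡ (b : ℤ) * (x : ℤ) [ZMOD (p : ℤ)] ↔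
      (x : ZMod p) ^ 3 + ((2 * a : ℤ) : ZMod p) = b * x := by
    intro b x
    rw [← ZMod.intCast_eq_intCast_iff]
    push_cast
    rfl
  have hp0 := hp.out.pos
  refine card_bij' (fun b _ => (b : ZMod p)) (fun b _ => b.val) ?_ ?_ ?_ ?_
  · intro b hb
    simp only [mem_filter, mem_univ, true_and] at hb ⊢
    obtain ⟨_, x, _, hx⟩ := hb
    exact ⟨x, (key b x).mp hx⟩
  · intro b hb
    simp only [mem_filter, mem_univ, true_and, mem_range] at hb ⊢
    obtain ⟨x, hx⟩ := hb
    have hx0 : x ≠ 0 := by rintro rfl; rw [mul_zero] at hx; apply ha; rw [← hx]; ring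
    refine ⟨ZMod.val_lt b, x.val, ?_, ?_⟩
    · rw [mem_Icc]
      have h1 := ZMod.val_lt x
      have h2 : x.val ≠ 0 := by rwa [Ne, ZMod.val_eq_zero]
      omega
    · rw [key, ZMod.natCast_zmod_val, ZMod.natCast_zmod_val]; exact hx
  · intro b hb
    simp only [mem_filter, mem_range] at hb
    exact ZMod.val_cast_of_lt hb.1
  · intro b hb
    exact ZMod.natCast_zmod_val b

end

/-- Uniqueness of the representation `p = A² + 3B²`. -/
lemma aux_unique (p : ℤ) (hp : Prime p) (hp0 : 0 < p) (A B C D : ℤ) (h1 : p = A ^ 2 + 3 * B ^ 2)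
    (h2 : p = C ^ 2 + 3 * D ^ 2) : A ^ 2 = C ^ 2 ∧ B ^ 2 = D ^ 2 := by
  have small : ∀ X Y : ℤ, p ^ 2 = X ^ 2 + 3 * Y ^ 2 → p ∣ Y → Y = 0 := by
    rintro X Y h ⟨k, rfl⟩
    by_contra hne
    have hk : k ≠ 0 := by rintro rfl; simp at hne
    have : 1 ≤ k ^ 2 := by have := sq_pos_of_ne_zero hk; omega
    nlinarith [sq_nonneg X, mul_pos hp0 hp0, mul_le_mul_of_nonneg_left this (mul_pos hp0 hp0).le]
  have hd : p ∣ (A * D - C * B) * (A * D + C * B) := by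
    refine ⟨D ^ 2 - B ^ 2, ?_⟩
    linear_combination  -D ^ 2 * h1 + B ^ 2 * h2
  have hz : (A * D - C * B) * (A * D + C * B) = 0 := by
    rcases hp.dvd_or_dvd hd with h | h
    · rw [small (A * C + 3 * B * D) _ (by rw [pow_two]; nth_rw 1 [h1]; rw [h2]; ring) h, zero_mul]
    · rw [small (A * C - 3 * B * D) _ (by rw [pow_two]; nth_rw 1 [h1]; rw [h2]; ring) h, mul_zero]
  have : p * (D ^ 2 - B ^ 2) = 0 := by
    rw [← hz]; linear_combination D ^ 2 * h1 - B ^ 2 * h2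
  have h := (mul_eq_zero.mp this).resolve_left hp0.ne'
  constructor <;> linarith

theorem stmt_2 (p : ℕ) [hp : Fact p.Prime] (hp1 : p % 3 = 1)
    (A B : ℤ) (hpAB : (p : ℤ) = A ^ 2 + 3 * B ^ 2) (hA : A % 3 = 1)
    (a : ℤ) (ha : ¬ (p : ℤ) ∣ a) :
    (((a : ZMod p)) ^ ((p - 1) / 3) = 1 →
      3 * (((Finset.range p).filter (fun b : ℕ =>
      ∃ x ∈ Finset.Icc 1 (p - 1),
        (x : ℤ) ^ 3 + (2 * a) ≡ (b : ℤ) * (x : ℤ) [ZMOD (p : ℤ)])).card : ℤ) = 2 * (p : ℤ) - 1 + 2 * A) ∧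
    (((a : ZMod p)) ^ ((p - 1) / 3) = (-1 - (A : ZMod p) * (B : ZMod p)⁻¹) / 2 →
      3 * (((Finset.range p).filter (fun b : ℕ =>
      ∃ x ∈ Finset.Icc 1 (p - 1),
        (x : ℤ) ^ 3 + (2 * a) ≡ (b : ℤ) * (x : ℤ) [ZMOD (p : ℤ)])).card : ℤ) = 2 * (p : ℤ) - 1 - A + 3 * B) ∧
    (((a : ZMod p)) ^ ((p - 1) / 3) = (-1 + (A : ZMod p) * (B : ZMod p)⁻¹) / 2 →
      3 * (((Finset.range p).filter (fun b : ℕ =>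
      ∃ x ∈ Finset.Icc 1 (p - 1),
        (x : ℤ) ^ 3 + (2 * a) ≡ (b : ℤ) * (x : ℤ) [ZMOD (p : ℤ)])).card : ℤ) = 2 * (p : ℤ) - 1 - A - 3 * B) := by
  have hp2 : p ≠ 2 := by omega
  have hpodd : p % 2 = 1 := (hp.out.eq_two_or_odd).resolve_left hp2
  have h2 := aux_two (p := p) hp2
  have h3 := aux_three (p := p) hp1
  have ha0 : (a : ZMod p) ≠ 0 := by
    rwa [Ne, ZMod.intCast_zmod_eq_zero_iff_dvd]
  have h2a : (2 : ZMod p) * a ≠ 0 := mul_ne_zero h2 ha0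
  have hcast : ((2 * a : ℤ) : ZMod p) = 2 * a := by push_cast; rfl
  rw [aux_transfer a (by rw [hcast]; exact h2a), hcast]
  have hV := aux_V hp1 (2 * (a : ZMod p)) h2a
  set V := (univ.filter (fun b : ZMod p => ∃ x : ZMod p, x ^ 3 + 2 * (a : ZMod p) = b * x)).card
  have hV2 := aux_V hp1 (2 : ZMod p) h2
  set W := (univ.filter (fun b : ZMod p => ∃ x : ZMod p, x ^ 3 + 2 = b * x)).card
  obtain ⟨ψ, J1, J2, hJ, hψ3, hψne, hψM⟩ := aux_complex (p := p) hp1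
  have hrel : ∀ g : ZMod p, g ≠ 0 → ψ g ≠ 1 → ∀ s t : ℤ, (auxM p 2 : ℤ) = p - 2 + s →
      (auxM p (2 * g) : ℤ) = p - 2 + t → s ^ 2 + s * t + t ^ 2 = 3 * p := by
    intro g hg hg1 s t hs ht
    have hw : ψ g ^ 2 + ψ g + 1 = 0 := by
      have : (ψ g - 1) * (ψ g ^ 2 + ψ g + 1) = 0 := by linear_combination hψ3 g hg
      exact (mul_eq_zero.mp this).resolve_left (sub_ne_zero.mpr hg1)
    have hs' : (s : ℂ) = ψ 2 * J2 + ψ 2 ^ 2 * J1 := by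
      have h := hψM 2 h2
      have h' : ((auxM p 2 : ℤ) : ℂ) = ((p - 2 + s : ℤ) : ℂ) := by rw [hs]
      push_cast at h'
      linear_combination h - h'
    have ht' : (t : ℂ) = ψ 2 * ψ g * J2 + ψ 2 ^ 2 * ψ g ^ 2 * J1 := by
      have h := hψM (2 * g) (mul_ne_zero h2 hg)
      rw [map_mul] at h
      have h' : ((auxM p (2 * g) : ℤ) : ℂ) = ((p - 2 + t : ℤ) : ℂ) := by rw [ht]
      push_cast at h'
      linear_combination h - h'
    have : ((s ^ 2 + s * t + t ^ 2 : ℤ) : ℂ) = ((3 * p : ℤ) : ℂ) := by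
      push_cast
      rw [hs', ht', ← hJ]
      have e2 := hψ3 2 h2
      generalize ψ 2 = P at *
      generalize ψ g = w at *
      have hw3 : w ^ 3 = 1 := by linear_combination (w - 1) * hw
      have hw2 : w ^ 2 = -1 - w := by linear_combination hw
      have hP4 : P ^ 4 = P := by linear_combination P * e2
      have e : (P * J2 + P ^ 2 * J1) ^ 2 + (P * J2 + P ^ 2 * J1) * (P * w * J2 + P ^ 2 * w ^ 2 * J1) +
        (P * w * J2 + P ^ 2 * w ^ 2 * J1) ^ 2 = P ^ 2 * J2 ^ 2 * (w ^ 2 + w + 1)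
          + P ^ 4 * J1 ^ 2 * (w * w ^ 3 + w ^ 2 + 1) + P ^ 3 * (J1 * J2) * (2 + w + w ^ 2 + 2 * w ^ 3) := by
        ring
      rw [e, hw3, e2, show w * 1 + w ^ 2 + 1 = 0 by linear_combination hw, hw]
      linear_combination J1 * J2 * hw
    exact_mod_cast this
  obtain ⟨s, hs⟩ : ∃ s : ℤ, (auxM p 2 : ℤ) = p - 2 + s := ⟨auxM p 2 - (p - 2), by ring⟩
  have hodd : Odd (auxM p (2 : ZMod p)) := aux_even 2 hp2 hp1 1 one_ne_zero (by norm_num)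
  obtain ⟨A', hA'⟩ : ∃ A' : ℤ, s = -2 * A' := by
    obtain ⟨k, hk⟩ := hodd
    exact ⟨-s / 2, by omega⟩
  have hA'3 : A' % 3 = 1 := by omega
  have hrep : ∀ g : ZMod p, g ≠ 0 → ψ g ≠ 1 → ∀ t : ℤ, (auxM p (2 * g) : ℤ) = p - 2 + t →
      ∃ B' : ℤ, t = A' + 3 * B' ∧ (p : ℤ) = A' ^ 2 + 3 * B' ^ 2 := by
    intro g hg hg1 t ht
    have h := hrel g hg hg1 s t hs ht
    have hd : (3 : ℤ) ∣ (t - A') ^ 2 := ⟨p - A' ^ 2, by rw [hA'] at h; linear_combination h⟩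
    obtain ⟨B', hB'⟩ := Int.prime_three.dvd_of_dvd_pow hd
    refine ⟨B', by linarith, ?_⟩
    have ht' : t = A' + 3 * B' := by linarith
    rw [hA', ht'] at h
    linarith
  have hpp : Prime (p : ℤ) := Nat.prime_iff_prime_int.mp hp.out
  have hp0 : (0 : ℤ) < p := by exact_mod_cast hp.out.pos
  have hAA : A' = A := by
    obtain ⟨g, hg, hg1⟩ := hψne
    obtain ⟨B', _, hB'⟩ := hrep g hg hg1 (auxM p (2 * g) - (p - 2)) (by ring)
    obtain ⟨h, _⟩ := aux_unique p hpp hp0 A B A' B' hpAB hB'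
    rcases sq_eq_sq_iff_eq_or_eq_neg.mp h with h | h
    · exact h.symm
    · omega
  subst hAA
  obtain ⟨t, ht⟩ : ∃ t : ℤ, (auxM p (2 * (a : ZMod p)) : ℤ) = p - 2 + t :=
    ⟨auxM p (2 * (a : ZMod p)) - (p - 2), by ring⟩
  obtain ⟨hmod, hcube⟩ := aux_modp hp1 (a : ZMod p) 2 ha0 h2
  have hV' : 3 * (V : ℤ) = 2 * p - 1 - t := by omega
  have hsm : ((auxM p (2 : ZMod p) : ZMod p)) + 2 = -2 * (A' : ZMod p) := by
    have h' : ((auxM p 2 : ℤ) : ZMod p) = ((p - 2 + s : ℤ) : ZMod p) := by rw [hs]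
    rw [hA'] at h'
    push_cast at h'
    rw [h', CharP.cast_eq_zero]; ring
  have htm : (t : ZMod p) = (a : ZMod p) ^ ((p - 1) / 3) * (-2 * (A' : ZMod p)) := by
    rw [← hsm, ← hmod]
    have h' : ((auxM p (2 * (a : ZMod p)) : ℤ) : ZMod p) = ((p - 2 + t : ℤ) : ZMod p) := by rw [ht]
    push_cast at h'
    rw [h', CharP.cast_eq_zero]; ring
  have hB0 : (B : ZMod p) ≠ 0 := by
    rw [Ne, ZMod.intCast_zmod_eq_zero_iff_dvd]
    intro hB
    have hA2 : (p : ℤ) ∣ A' ^ 2 := by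
      have : A' ^ 2 = p - 3 * B * B := by linear_combination -hpAB
      rw [this]
      exact dvd_sub dvd_rfl (hB.mul_left _)
    have hA1 := hpp.dvd_of_dvd_pow hA2
    have : (p : ℤ) * p ∣ p * 1 := by
      rw [mul_one]; nth_rw 3 [hpAB]
      rw [pow_two, pow_two]
      exact dvd_add (mul_dvd_mul hA1 hA1) ((mul_dvd_mul hB hB).mul_left _)
    exact hpp.not_dvd_one (Int.dvd_of_mul_dvd_mul_left hp0.ne' this)
  have hAB0 : (A' : ZMod p) ^ 2 = -3 * (B : ZMod p) ^ 2 := by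
    have h' : ((p : ℤ) : ZMod p) = ((A' ^ 2 + 3 * B ^ 2 : ℤ) : ZMod p) := by rw [hpAB]
    push_cast at h'
    rw [CharP.cast_eq_zero] at h'
    linear_combination -h'
  have hnon : ∀ C : ℤ, C ^ 2 = B ^ 2 → (C : ZMod p) ≠ 0 →
      (a : ZMod p) ^ ((p - 1) / 3) = (-1 - (A' : ZMod p) * (C : ZMod p)⁻¹) / 2 → t = A' - 3 * C := by
    intro C hC hC0 h
    have hC2 : (C : ZMod p) ^ 2 = (B : ZMod p) ^ 2 := by exact_mod_cast congrArg (Int.cast (R := ZMod p)) hC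
    have hA2 : (A' : ZMod p) ^ 2 = -3 * (C : ZMod p) ^ 2 := by rw [hC2]; exact hAB0
    have hne : ψ (a : ZMod p) ≠ 1 := by
      intro h1
      have h1 := hcube.mpr ((aux_cube_iff ψ hψ3 hψne _ ha0).mp h1)
      rw [h1] at h
      field_simp at h
      have h4 : (A' : ZMod p) = -3 * C := by linear_combination h
      rw [h4] at hA2
      have : 2 * 2 * 3 * (C : ZMod p) ^ 2 = 0 := by linear_combination hA2
      simp [h2, h3, hC0] at this
    have htC : (t : ZMod p) = A' - 3 * C := by
      rw [htm, h]
      field_simp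
      linear_combination hA2
    obtain ⟨B', hB', hrepB⟩ := hrep a ha0 hne t ht
    obtain ⟨_, hBB⟩ := aux_unique p hpp hp0 A' B A' B' hpAB hrepB
    rcases sq_eq_sq_iff_eq_or_eq_neg.mp (hBB.symm.trans hC.symm) with h5 | h5
    · exfalso
      rw [hB', h5] at htC
      push_cast at htC
      have : 2 * 3 * (C : ZMod p) = 0 := by linear_combination htC
      simp [h2, h3, hC0] at this
    · rw [hB', h5]; ring
  refine ⟨?_, ?_, ?_⟩
  · intro h
    have h1 : ψ (a : ZMod p) = 1 := (aux_cube_iff ψ hψ3 hψne _ ha0).mpr (hcube.mp h)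
    have hEq : (auxM p (2 * (a : ZMod p)) : ℂ) = auxM p (2 : ZMod p) := by
      rw [hψM _ h2a, hψM _ h2, map_mul, h1, mul_one]
    have hEq' : auxM p (2 * (a : ZMod p)) = auxM p (2 : ZMod p) := by exact_mod_cast hEq
    rw [hEq'] at ht
    linarith
  · intro h
    have := hnon B rfl hB0 h
    linarith
  · intro h
    have := hnon (-B) (by ring) (by simpa using hB0) (by rw [h]; push_cast; rw [inv_neg]; ring)
    linarith
end
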